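/- Let α be a locally Lipschitz class K function. For every r > 0 and t > 0, the function β_α is differentiable in each variable at (r,t), with ∂β_α/∂t (r,t) = −α(β_α(r,t)) and ∂β_α/∂r (r,t) = α(β_α(r,t)) / α(r). -/

import Mathlib

open Set Filter MeasureTheory Topology

noncomputable section

/-- `α : [0,∞) → [0,∞)` is a class `K` function: continuous, strictly increasing, `α 0 = 0`. -/
def IsClassK (α : ℝ → ℝ) : Prop :=
  ContinuousOn α (Set.Ici 0) ∧ StrictMonoOn α (Set.Ici 0) ∧ α 0 = 0

/-- `α` is a locally Lipschitz class `K` function on `[0,∞)`. -/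
def IsLocallyLipschitzClassK (α : ℝ → ℝ) : Prop :=
  IsClassK α ∧
    ∀ x ∈ Set.Ici (0 : ℝ), ∃ K : NNReal, ∃ s ∈ nhdsWithin x (Set.Ici (0 : ℝ)),
      LipschitzOnWith K α s

/-- `β` is the function `β_α`: for each `r ≥ 0`, `t ↦ β r t` solves `y' = -α y`, `y 0 = r`,
staying in `[0, r]` for all `t ≥ 0`. -/
def IsBetaFor (α : ℝ → ℝ) (β : ℝ → ℝ → ℝ) : Prop :=
  ∀ r : ℝ, 0 ≤ r →
    β r 0 = r ∧ ∀ t : ℝ, 0 ≤ t →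
      0 ≤ β r t ∧ β r t ≤ r ∧ HasDerivWithinAt (β r) (-α (β r t)) (Set.Ici 0) t

/-!
The derivative in the initial value is a derivative in time. Fix `R > r`. The trajectory of `R`
passes through `r` with speed `α r > 0`, so the inverse function theorem gives the time `T ρ` at
which it reaches `ρ`, for `ρ` near `r`, and `T' r = -1 / α r`. By the semigroup property
`β ρ t = β R (T ρ + t)`, and the chain rule gives `∂β/∂r = -α (β r t) * (-1 / α r)`.

The semigroup property is forward uniqueness, which comes from the monotonicity of `α`: the distance
between two solutions of `y' = -α y` is nonincreasing.
-/

section IntegralCurve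

variable {E : Type*} {a r c t : ℝ}

theorem eqOn_Ici_of_isIntegralCurveOn_of_inner_nonpos [NormedAddCommGroup E]
    [InnerProductSpace ℝ E] {v : ℝ → E → E} {γ δ : ℝ → E}
    (hγ : IsIntegralCurveOn γ v (Ici a)) (hδ : IsIntegralCurveOn δ v (Ici a))
    (hv : ∀ t ∈ Ioi a, inner ℝ (γ t - δ t) (v t (γ t) - v t (δ t)) ≤ 0) (h : γ a = δ a) :
    EqOn γ δ (Ici a) := by
  have hderiv : ∀ t ∈ Ici a, HasDerivWithinAt (fun s ↦ ‖γ s - δ s‖ ^ 2)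
      (2 * inner ℝ (γ t - δ t) (v t (γ t) - v t (δ t))) (Ici a) t :=
    fun t ht ↦ ((hγ t ht).sub (hδ t ht)).norm_sq
  have hanti : AntitoneOn (fun s ↦ ‖γ s - δ s‖ ^ 2) (Ici a) := by
    refine antitoneOn_of_hasDerivWithinAt_nonpos (convex_Ici a)
      (fun t ht ↦ (hderiv t ht).continuousWithinAt)
      (fun t ht ↦ (hderiv t (interior_subset ht)).mono interior_subset) fun t ht ↦ ?_
    rw [interior_Ici] at ht
    exact mul_nonpos_of_nonneg_of_nonpos zero_le_two (hv t ht)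
  intro t ht
  have hle : ‖γ t - δ t‖ ^ 2 ≤ ‖γ a - δ a‖ ^ 2 := hanti self_mem_Ici ht ht
  rw [h, sub_self, norm_zero, zero_pow two_ne_zero] at hle
  exact sub_eq_zero.mp (norm_eq_zero.mp (pow_eq_zero_iff two_ne_zero |>.mp
    (hle.antisymm (sq_nonneg _))))

theorem eqOn_Ici_of_isIntegralCurveOn_of_antitoneOn {v : ℝ → ℝ → ℝ} {s : Set ℝ} {γ δ : ℝ → ℝ}
    (hv : ∀ t ∈ Ioi a, AntitoneOn (v t) s)
    (hγ : IsIntegralCurveOn γ v (Ici a)) (hγs : MapsTo γ (Ioi a) s)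
    (hδ : IsIntegralCurveOn δ v (Ici a)) (hδs : MapsTo δ (Ioi a) s) (h : γ a = δ a) :
    EqOn γ δ (Ici a) := by
  refine eqOn_Ici_of_isIntegralCurveOn_of_inner_nonpos hγ hδ (fun t ht ↦ ?_) h
  rw [Real.inner_apply]
  rcases le_total (γ t) (δ t) with hle | hle
  · exact mul_nonpos_of_nonpos_of_nonneg (sub_nonpos.mpr hle)
      (sub_nonneg.mpr (hv t ht (hγs ht) (hδs ht) hle))
  · exact mul_nonpos_of_nonneg_of_nonpos (sub_nonneg.mpr hle)
      (sub_nonpos.mpr (hv t ht (hδs ht) (hγs ht) hle))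

theorem hasStrictDerivAt_of_isIntegralCurveOn [NormedAddCommGroup E] [NormedSpace ℝ E]
    {v : E → E} {γ : ℝ → E} {s : Set ℝ} (hγ : IsIntegralCurveOn γ (fun _ ↦ v) s) (hs : s ∈ 𝓝 t)
    (hv : ContinuousAt v (γ t)) : HasStrictDerivAt γ (v (γ t)) t :=
  hasStrictDerivAt_of_hasDerivAt_of_continuousAt (hγ.isIntegralCurveAt hs)
    (ContinuousAt.comp hv (hγ.isIntegralCurveAt hs).continuousAt)

theorem exists_eq_of_hasDerivWithinAt_le_neg {f f' : ℝ → ℝ}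
    (hf : ∀ t ∈ Ici a, HasDerivWithinAt f (f' t) (Ici a) t) (hc : 0 < c)
    (hf' : ∀ t ∈ Ioi a, r < f t → f' t ≤ -c) (hr : r ≤ f a) : ∃ t ∈ Ici a, f t = r := by
  have hcont : ContinuousOn f (Ici a) := fun t ht ↦ (hf t ht).continuousWithinAt
  obtain ⟨b, hab, hb⟩ : ∃ b ∈ Ici a, f b ≤ r := by
    by_contra! hgt
    have hslope := (convex_Ici a).image_sub_le_mul_sub_of_deriv_le (C := -c) hcont
      (fun t ht ↦ ((hf t (interior_subset ht)).mono interior_subset).differentiableWithinAt)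
      fun t ht ↦ by
        rw [((hf t (interior_subset ht)).hasDerivAt (mem_interior_iff_mem_nhds.mp ht)).deriv]
        exact hf' t (by rwa [interior_Ici] at ht) (hgt t (interior_subset ht))
    have hle : a ≤ a + (f a - r) / c :=
      le_add_of_nonneg_right (div_nonneg (sub_nonneg.mpr hr) hc.le)
    have hdrop := hslope a self_mem_Ici _ hle hle
    have hcancel : -c * (a + (f a - r) / c - a) = r - f a := by field_simp; ring
    linarith [hgt _ hle]
  obtain ⟨t, ht, hft⟩ := intermediate_value_Icc' hab (hcont.mono Icc_subset_Ici_self) ⟨hb, hr⟩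
  exact ⟨t, ht.1, hft⟩

end IntegralCurve

theorem IsClassK.pos {α : ℝ → ℝ} (hα : IsClassK α) {x : ℝ} (hx : 0 < x) : 0 < α x :=
  hα.2.2 ▸ hα.2.1 self_mem_Ici hx.le hx

namespace IsBetaFor

variable {α : ℝ → ℝ} {β : ℝ → ℝ → ℝ} {r s t R : ℝ}

theorem apply_zero (hβ : IsBetaFor α β) (hr : 0 ≤ r) : β r 0 = r :=
  (hβ r hr).1

theorem nonneg (hβ : IsBetaFor α β) (hr : 0 ≤ r) (ht : 0 ≤ t) : 0 ≤ β r t :=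
  ((hβ r hr).2 t ht).1

theorem isIntegralCurveOn (hβ : IsBetaFor α β) (hr : 0 ≤ r) :
    IsIntegralCurveOn (β r) (fun _ x ↦ -α x) (Ici 0) :=
  fun t ht ↦ ((hβ r hr).2 t ht).2.2

theorem hasDerivAt_time (hβ : IsBetaFor α β) (hr : 0 ≤ r) (ht : 0 < t) :
    HasDerivAt (β r) (-α (β r t)) t :=
  (hβ.isIntegralCurveOn hr).isIntegralCurveAt (Ici_mem_nhds ht) |>.hasDerivAt

theorem apply_apply (hβ : IsBetaFor α β) (hα : MonotoneOn α (Ici 0)) (hr : 0 ≤ r) (hs : 0 ≤ s)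
    (ht : 0 ≤ t) : β (β r s) t = β r (t + s) := by
  have hβs : 0 ≤ β r s := hβ.nonneg hr hs
  have hshift : IsIntegralCurveOn (fun u ↦ β r (u + s)) (fun _ x ↦ -α x) (Ici 0) :=
    ((hβ.isIntegralCurveOn hr).comp_add s).mono fun u hu ↦
      ⟨u + s, add_nonneg hu hs, by simp⟩
  refine eqOn_Ici_of_isIntegralCurveOn_of_antitoneOn (fun _ _ ↦ hα.neg)
    (hβ.isIntegralCurveOn hβs) (fun u hu ↦ hβ.nonneg hβs (le_of_lt hu))
    hshift (fun u hu ↦ hβ.nonneg hr (add_nonneg (le_of_lt hu) hs)) ?_ ht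
  rw [hβ.apply_zero hβs, zero_add]

theorem exists_pos_apply_eq (hβ : IsBetaFor α β) (hα : MonotoneOn α (Ici 0)) (hr : 0 ≤ r)
    (hαr : 0 < α r) (hrR : r < R) : ∃ τ > 0, β R τ = r := by
  have hR : 0 ≤ R := hr.trans hrR.le
  obtain ⟨τ, hτ, hτr⟩ := exists_eq_of_hasDerivWithinAt_le_neg (hβ.isIntegralCurveOn hR) hαr
    (fun t _ hlt ↦ neg_le_neg (hα hr (hr.trans hlt.le) hlt.le))
    (hrR.le.trans_eq (hβ.apply_zero hR).symm)
  refine ⟨τ, hτ.lt_of_ne' ?_, hτr⟩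
  rintro rfl
  exact hrR.ne' (hβ.apply_zero hR ▸ hτr)

theorem exists_passageTime (hβ : IsBetaFor α β) (hα : IsClassK α) (hr : 0 < r) (hrR : r < R) :
    ∃ T : ℝ → ℝ, 0 < T r ∧ HasDerivAt T (-α r)⁻¹ r ∧ ∀ᶠ ρ in 𝓝 r, β R (T ρ) = ρ := by
  obtain ⟨τ, hτ, rfl⟩ := hβ.exists_pos_apply_eq hα.2.1.monotoneOn hr.le (hα.pos hr) hrR
  have hstrict : HasStrictDerivAt (β R) (-α (β R τ)) τ :=
    hasStrictDerivAt_of_isIntegralCurveOn (v := fun x ↦ -α x)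
      (hβ.isIntegralCurveOn (hr.trans hrR).le) (Ici_mem_nhds hτ)
      (hα.1.continuousAt (Ici_mem_nhds hr)).neg
  have hspeed : -α (β R τ) ≠ 0 := neg_ne_zero.mpr (hα.pos hr).ne'
  refine ⟨hstrict.localInverse _ _ _ hspeed, ?_, (hstrict.to_localInverse hspeed).hasDerivAt,
    hstrict.eventually_right_inverse hspeed⟩
  rwa [(hstrict.eventually_left_inverse hspeed).self_of_nhds]

theorem hasDerivAt_initial (hβ : IsBetaFor α β) (hα : IsClassK α) (hr : 0 < r) (ht : 0 ≤ t) :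
    HasDerivAt (fun ρ ↦ β ρ t) (α (β r t) / α r) r := by
  obtain ⟨R, hrR⟩ := exists_gt r
  have hR : 0 ≤ R := (hr.trans hrR).le
  obtain ⟨T, hTpos, hT, hβT⟩ := hβ.exists_passageTime hα hr hrR
  have hflow : ∀ᶠ ρ in 𝓝 r, β ρ t = β R (T ρ + t) := by
    filter_upwards [hβT, hT.continuousAt.eventually (lt_mem_nhds hTpos)] with ρ hρ hTρ
    rw [add_comm, ← hβ.apply_apply hα.2.1.monotoneOn hR hTρ.le ht, hρ]
  have hchain : HasDerivAt (fun ρ ↦ β R (T ρ + t)) (-α (β R (T r + t)) * (-α r)⁻¹) r :=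
    (hβ.hasDerivAt_time hR (add_pos_of_pos_of_nonneg hTpos ht)).comp r (hT.add_const t)
  rw [← hflow.self_of_nhds, ← div_eq_mul_inv, neg_div_neg_eq] at hchain
  exact hchain.congr_of_eventuallyEq hflow

end IsBetaFor

theorem beta_partial_derivatives_general
    (α : ℝ → ℝ) (hα : IsClassK α) (β : ℝ → ℝ → ℝ) (hβ : IsBetaFor α β) :
    ∀ r : ℝ, 0 < r → ∀ t : ℝ, 0 < t →
      HasDerivAt (fun s ↦ β r s) (-α (β r t)) t ∧
      HasDerivAt (fun ρ ↦ β ρ t) (α (β r t) / α r) r :=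
  fun _ hr _ ht ↦ ⟨hβ.hasDerivAt_time hr.le ht, hβ.hasDerivAt_initial hα hr ht.le⟩

/-- For `r, t > 0`, `β_α` is differentiable in each variable at `(r,t)`,
with `∂β_α/∂t (r,t) = -α (β_α r t)` and `∂β_α/∂r (r,t) = α (β_α r t) / α r`. -/
theorem beta_partial_derivatives
    (α : ℝ → ℝ) (hα : IsLocallyLipschitzClassK α)
    (β : ℝ → ℝ → ℝ) (hβ : IsBetaFor α β) :
    ∀ r : ℝ, 0 < r → ∀ t : ℝ, 0 < t →
      HasDerivWithinAt (fun s => β r s) (-α (β r t)) (Set.Ici 0) t ∧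
      HasDerivWithinAt (fun ρ => β ρ t) (α (β r t) / α r) (Set.Ici 0) r := by
  intro r hr t ht
  exact (beta_partial_derivatives_general α hα.1 β hβ r hr t ht).imp
    HasDerivAt.hasDerivWithinAt HasDerivAt.hasDerivWithinAt
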